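/- Let ĝ and g be finite-dimensional real Lie algebras, q : ĝ → g a surjective Lie algebra homomorphism with kernel n, and V a finite-dimensional real g-module, regarded as a ĝ-module via x·v := q(x)·v. Let p ≥ 1 and let f : n^p → V be a symmetric ĝ-invariant p-linear map. Then for any two linear sections σ₀, σ₁ : g → ĝ of q there exists an alternating (2p−1)-linear map η : g^{2p−1} → V such that f_{σ₀} − f_{σ₁} = d_g η; i.e., the cohomology class of the Chern–Weil cocycle f_σ in H^{2p}(g,V) is independent of the choice of linear section σ of q (Lecomte's generalized Chern–Weil map is well defined). -/

import Mathlib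

open scoped BigOperators

/-- The Chevalley–Eilenberg differential on `V`-valued cochains of a Lie algebra `g`
acting on a module `V`. -/
def ceDiff {g V : Type*} [LieRing g] [AddCommGroup V] [LieRingModule g V]
    (p : ℕ) (ω : (Fin p → g) → V) : (Fin (p + 1) → g) → V :=
  fun x =>
    (∑ j : Fin (p + 1), ((-1 : ℤ) ^ (j : ℕ)) • ⁅x j, ω (x ∘ j.succAbove)⁆)
      + ∑ j : Fin (p + 1), ∑ i : Fin (p + 1),
          if (i : ℕ) < (j : ℕ) then
            ((-1 : ℤ) ^ ((i : ℕ) + (j : ℕ))) •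
              ω (fun k : Fin p =>
                if (k : ℕ) = 0 then ⁅x i, x j⁆
                else
                  x ⟨if (k : ℕ) - 1 < (i : ℕ) then (k : ℕ) - 1
                     else if (k : ℕ) < (j : ℕ) then (k : ℕ) else (k : ℕ) + 1,
                     by have := k.isLt; split_ifs <;> omega⟩)
          else 0

/-- The curvature `R_σ(x,y) = ⁅σ x, σ y⁆ - σ ⁅x,y⁆` of a linear section `σ` of a surjective
Lie algebra morphism `π : gh → g`, as an element of the kernel `n = ker π`. -/
def curvKer {g gh : Type*} [LieRing g] [LieAlgebra ℝ g]
    [LieRing gh] [LieAlgebra ℝ gh]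
    (π : gh →ₗ⁅ℝ⁆ g) (σ : g →ₗ[ℝ] gh) (hσ : ∀ x, π (σ x) = x) (x y : g) :
    π.ker :=
  ⟨⁅σ x, σ y⁆ - σ ⁅x, y⁆, by
    rw [LieHom.mem_ker]
    simp [hσ]⟩

/-- The Chern–Weil cochain `f_σ (x₁,…,x_{2p}) = 2^{-p} Σ_{τ ∈ S_{2p}} sgn(τ)
f(R(x_{τ(1)},x_{τ(2)}),…,R(x_{τ(2p-1)},x_{τ(2p)}))`.  The arity `a` is passed along with a
proof `a = 2*p`. -/
noncomputable def chernWeil {g gh V : Type*} [LieRing g] [LieAlgebra ℝ g]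
    [LieRing gh] [LieAlgebra ℝ gh] [AddCommGroup V] [Module ℝ V]
    (π : gh →ₗ⁅ℝ⁆ g) (p a : ℕ) (ha : a = 2 * p)
    (σ : g →ₗ[ℝ] gh) (hσ : ∀ x, π (σ x) = x)
    (f : MultilinearMap ℝ (fun _ : Fin p => π.ker) V) :
    (Fin a → g) → V :=
  fun x => ((2 : ℝ) ^ p)⁻¹ •
    ∑ τ : Equiv.Perm (Fin a),
      ((Equiv.Perm.sign τ : ℤ)) •
        f (fun s : Fin p =>
          curvKer π σ hσ
            (x (τ ⟨2 * (s : ℕ), by have := s.isLt; omega⟩))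
            (x (τ ⟨2 * (s : ℕ) + 1, by have := s.isLt; omega⟩)))

open Equiv Finset

/-- antisymmetrization -/
def altS {g V : Type*} [AddCommGroup V] (m : ℕ) (F : (Fin m → g) → V) (x : Fin m → g) : V :=
  ∑ τ : Equiv.Perm (Fin m), (Equiv.Perm.sign τ : ℤ) • F (fun i => x (τ i))

section
variable {g V : Type*} [AddCommGroup V]

lemma altS_perm (m : ℕ) (F : (Fin m → g) → V) (x : Fin m → g) (ρ : Equiv.Perm (Fin m)) :
    altS m (fun y => F (fun i => y (ρ i))) x = (Equiv.Perm.sign ρ : ℤ) • altS m F x := by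
  unfold altS
  rw [Finset.smul_sum, ← Equiv.sum_comp (Equiv.mulRight ρ⁻¹)]
  refine Finset.sum_congr rfl fun τ _ => ?_
  simp [smul_smul, mul_comm]

lemma altS_swap (m : ℕ) (F : (Fin m → g) → V) (x : Fin m → g) (a b : Fin m) (h : a ≠ b) :
    altS m (fun y => F (fun i => y (swap a b i))) x = - altS m F x := by
  rw [altS_perm, Equiv.Perm.sign_swap h]; simp

lemma altS_add (m : ℕ) (F G : (Fin m → g) → V) (x : Fin m → g) :
    altS m (fun y => F y + G y) x = altS m F x + altS m G x := by
  simp [altS, Finset.sum_add_distrib]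

lemma altS_sub (m : ℕ) (F G : (Fin m → g) → V) (x : Fin m → g) :
    altS m (fun y => F y - G y) x = altS m F x - altS m G x := by
  simp [altS, smul_sub]

lemma altS_neg (m : ℕ) (F : (Fin m → g) → V) (x : Fin m → g) :
    altS m (fun y => - F y) x = - altS m F x := by
  simp [altS]

lemma altS_sum {ι : Type*} (s : Finset ι) (m : ℕ) (F : ι → (Fin m → g) → V) (x : Fin m → g) :
    altS m (fun y => ∑ i ∈ s, F i y) x = ∑ i ∈ s, altS m (F i) x := by
  simp only [altS, Finset.smul_sum]
  rw [Finset.sum_comm]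

lemma altS_smul [Module ℝ V] (m : ℕ) (c : ℝ) (F : (Fin m → g) → V) (x : Fin m → g) :
    altS m (fun y => c • F y) x = c • altS m F x := by
  simp only [altS, Finset.smul_sum]
  exact Finset.sum_congr rfl fun τ _ => smul_comm _ _ _

lemma altS_succ (m : ℕ) (H : g → (Fin m → g) → V) (x : Fin (m + 1) → g) :
    altS (m + 1) (fun y => H (y 0) (fun i => y i.succ)) x =
      ∑ j : Fin (m + 1), ((-1 : ℤ) ^ (j : ℕ)) • altS m (H (x j)) (x ∘ j.succAbove) := by
  unfold altS
  let Φ : Fin (m + 1) × Equiv.Perm (Fin m) → Equiv.Perm (Fin (m + 1)) :=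
    fun q => (Fin.cycleRange q.1)⁻¹ * Equiv.Perm.decomposeFin.symm (0, q.2)
  have h0 : ∀ q, Φ q 0 = q.1 := by
    intro q
    simp [Φ, Equiv.Perm.inv_def]
  have hs : ∀ q i, Φ q (Fin.succ i) = q.1.succAbove (q.2 i) := by
    intro q i
    simp [Φ, Equiv.Perm.inv_def, Fin.cycleRange_symm_succ]
  have hb : Function.Bijective Φ := by
    rw [Fintype.bijective_iff_injective_and_card]
    refine ⟨?_, ?_⟩
    · rintro ⟨j, e⟩ ⟨j', e'⟩ h
      have h1 : j = j' := by
        have := congrArg (fun τ : Equiv.Perm (Fin (m+1)) => τ 0) h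
        simpa only [h0] using this
      subst h1
      have h2 := mul_left_cancel h
      have := Equiv.Perm.decomposeFin.symm.injective h2
      simpa using this
    · simp [Fintype.card_perm, Nat.factorial_succ]
  rw [← Function.Bijective.sum_comp hb, Fintype.sum_prod_type]
  refine Finset.sum_congr rfl fun j _ => ?_
  rw [Finset.smul_sum]
  refine Finset.sum_congr rfl fun e _ => ?_
  simp only [h0, hs]
  have hsg : (Equiv.Perm.sign (Φ (j, e)) : ℤ) = (-1) ^ (j : ℕ) * (Equiv.Perm.sign e : ℤ) := by
    simp [Φ, Fin.sign_cycleRange]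
  rw [hsg, mul_smul]
  rfl

lemma altS_cons (m : ℕ) (φ : (Fin (m + 1) → g) → V) (z : g) (y : Fin m → g) :
    altS (m + 1) φ (Fin.cons z y : Fin (m + 1) → g) =
      altS m (fun w => φ (Fin.cons z w : Fin (m + 1) → g)) y
      - ∑ k : Fin m, altS m (fun w => φ (fun i =>
          (Fin.cons z w : Fin (m + 1) → g) (swap 0 k.succ i))) y := by
  conv_lhs => unfold altS
  rw [← Equiv.sum_comp (Equiv.inv _), ← Equiv.sum_comp Equiv.Perm.decomposeFin.symm,
    Fintype.sum_prod_type]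
  have key : ∀ (k : Fin (m+1)) (e : Equiv.Perm (Fin m)) (i : Fin (m+1)),
      (Fin.cons z y : Fin (m + 1) → g) ((Equiv.Perm.decomposeFin.symm (k, e))⁻¹ i) =
      (Fin.cons z (fun l => y (e⁻¹ l)) : Fin (m + 1) → g) (swap 0 k i) := by
    intro k e i
    obtain ⟨l, rfl⟩ := (Equiv.Perm.decomposeFin.symm (k, e)).surjective i
    rw [show ((Equiv.Perm.decomposeFin.symm (k, e))⁻¹ ((Equiv.Perm.decomposeFin.symm (k, e)) l)) = l from Equiv.symm_apply_apply _ _]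
    refine Fin.cases ?_ (fun l => ?_) l
    · simp
    · simp
  have key2 : ∀ k : Fin (m+1), (∑ e : Equiv.Perm (Fin m),
      (Equiv.Perm.sign (Equiv.inv _ (Equiv.Perm.decomposeFin.symm (k, e))) : ℤ) •
        φ fun i => (Fin.cons z y : Fin (m + 1) → g)
          ((Equiv.inv _ (Equiv.Perm.decomposeFin.symm (k, e))) i)) =
      (if k = 0 then (1:ℤ) else -1) • altS m (fun w => φ (fun i =>
          (Fin.cons z w : Fin (m + 1) → g) (swap 0 k i))) y := by
    intro k
    unfold altS
    rw [← Equiv.sum_comp (Equiv.inv (Equiv.Perm (Fin m))), Finset.smul_sum]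
    refine Finset.sum_congr rfl fun e _ => ?_
    simp only [Equiv.inv_apply, key, Equiv.Perm.sign_inv, Equiv.Perm.decomposeFin.symm_sign,
      inv_inv, smul_smul]
    split_ifs <;> simp
  rw [Finset.sum_congr rfl fun k _ => key2 k, Fin.sum_univ_succ]
  simp [Fin.succ_ne_zero, sub_eq_add_neg]

end

section
variable {g V : Type*} [LieRing g] [AddCommGroup V] [LieRingModule g V]

lemma sA_val {n : ℕ} (a : Fin (n+1)) (b : Fin n) :
    ((a.succAbove b : Fin (n+1)) : ℕ) = if (b : ℕ) < (a : ℕ) then (b : ℕ) else (b : ℕ) + 1 := by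
  simp only [Fin.succAbove, Fin.lt_def, Fin.val_castSucc]
  split_ifs <;> simp

lemma ceDiff_eq (n : ℕ) (ω : (Fin (n + 1) → g) → V)
    (hω : ∀ z (y : Fin n → g), ω (Fin.cons (-z) y : Fin (n + 1) → g)
      = - ω (Fin.cons z y : Fin (n + 1) → g)) (x : Fin (n + 2) → g) :
    (2 : ℤ) • ceDiff (n + 1) ω x =
      (2 : ℤ) • (∑ j : Fin (n + 2), ((-1 : ℤ) ^ (j : ℕ)) • ⁅x j, ω (x ∘ j.succAbove)⁆)
      - ∑ a : Fin (n + 2), ((-1 : ℤ) ^ (a : ℕ)) • ∑ b : Fin (n + 1), ((-1 : ℤ) ^ (b : ℕ)) •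
        ω (Fin.cons ⁅x a, x (a.succAbove b)⁆ ((x ∘ a.succAbove) ∘ b.succAbove) :
          Fin (n + 1) → g) := by
  -- rest of the entries
  let W : Fin (n+2) → Fin (n+2) → Fin n → g := fun i j k =>
    x ⟨if (k : ℕ) < (i : ℕ) then (k : ℕ)
                     else if (k : ℕ) + 1 < (j : ℕ) then (k : ℕ) + 1 else (k : ℕ) + 2,
                     by have := k.isLt; split_ifs <;> omega⟩
  have hW : ∀ i j : Fin (n+2), (fun k : Fin (n+1) =>
                if (k : ℕ) = 0 then ⁅x i, x j⁆
                else
                  x ⟨if (k : ℕ) - 1 < (i : ℕ) then (k : ℕ) - 1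
                     else if (k : ℕ) < (j : ℕ) then (k : ℕ) else (k : ℕ) + 1,
                     by have := k.isLt; split_ifs <;> omega⟩) =
      (Fin.cons ⁅x i, x j⁆ (W i j) : Fin (n+1) → g) := by
    intro i j
    funext k
    refine Fin.cases ?_ (fun k => ?_) k
    · simp
    · simp [W]
  unfold ceDiff
  simp only [hW]
  rw [smul_add, sub_eq_add_neg]
  congr 1
  set T := ∑ j : Fin (n + 2), ∑ i : Fin (n + 2),
    if (i : ℕ) < (j : ℕ) then ((-1 : ℤ) ^ ((i : ℕ) + (j : ℕ))) •
      ω (Fin.cons ⁅x i, x j⁆ (W i j) : Fin (n+1) → g) else 0 with hT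
  let G : Fin (n+2) → Fin (n+2) → V := fun a c =>
    (if (c : ℕ) < (a : ℕ) then ((-1 : ℤ) ^ ((c : ℕ) + (a : ℕ))) •
      ω (Fin.cons ⁅x c, x a⁆ (W c a) : Fin (n+1) → g) else 0) +
    (if (a : ℕ) < (c : ℕ) then ((-1 : ℤ) ^ ((a : ℕ) + (c : ℕ))) •
      ω (Fin.cons ⁅x a, x c⁆ (W a c) : Fin (n+1) → g) else 0)
  have hG : ∑ a, ∑ c, G a c = (2:ℤ) • T := by
    simp only [G, Finset.sum_add_distrib]
    rw [two_smul, hT]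
    congr 1
    rw [Finset.sum_comm]
  rw [← hG, ← Finset.sum_neg_distrib]
  refine Finset.sum_congr rfl fun a _ => ?_
  rw [Fin.sum_univ_succAbove _ a]
  have : G a a = 0 := by simp [G]
  rw [this, zero_add, Finset.smul_sum, ← Finset.sum_neg_distrib]
  refine Finset.sum_congr rfl fun b _ => ?_
  rw [smul_smul, ← pow_add]
  by_cases hab : (b : ℕ) < (a : ℕ)
  · have hv : ((a.succAbove b : Fin (n+2)) : ℕ) = b := by
      rw [Fin.succAbove_of_castSucc_lt]; rfl
      exact hab
    have h2 : (x ∘ a.succAbove) ∘ b.succAbove = W (a.succAbove b) a := by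
      funext k
      simp only [W, Function.comp, hv]
      congr 1
      apply Fin.ext
      simp only [sA_val]
      split_ifs <;> omega
    have hn : ¬ (a : ℕ) < b := by omega
    simp only [G, hv, hab, hn, if_true, if_false, add_zero]
    rw [h2, ← lie_skew (x a), hω, smul_neg, neg_neg, add_comm]
  · have hv : ((a.succAbove b : Fin (n+2)) : ℕ) = b + 1 := by
      rw [Fin.succAbove_of_le_castSucc]; rfl
      simpa [Fin.le_def] using hab
    have h2 : (x ∘ a.succAbove) ∘ b.succAbove = W a (a.succAbove b) := by
      funext k
      simp only [W, Function.comp, hv]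
      congr 1
      apply Fin.ext
      simp only [sA_val]
      split_ifs <;> omega
    have hn : ¬ (b : ℕ) + 1 < a := by omega
    have hn' : (a : ℕ) < b + 1 := by omega
    simp only [G, hv, hn, hn', if_true, if_false, zero_add]
    rw [h2, ← neg_smul]
    congr 1
    ring

lemma ceDiff_altS (n : ℕ) (φ : (Fin (n + 1) → g) → V)
    (hω : ∀ z (y : Fin n → g), altS (n+1) φ (Fin.cons (-z) y : Fin (n + 1) → g)
      = - altS (n+1) φ (Fin.cons z y : Fin (n + 1) → g)) (x : Fin (n + 2) → g) :
    (2 : ℤ) • ceDiff (n + 1) (altS (n+1) φ) x =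
      (2 : ℤ) • altS (n + 2) (fun y => ⁅y 0, φ (fun i => y i.succ)⁆) x
      - altS (n+2) (fun y => φ (Fin.cons ⁅y 0, y 1⁆ (fun i => y i.succ.succ))) x
      + ∑ k : Fin n, altS (n+2) (fun y => φ (fun i =>
          (Fin.cons ⁅y 0, y 1⁆ (fun i => y i.succ.succ) : Fin (n + 1) → g) (swap 0 k.succ i))) x := by
  rw [ceDiff_eq n _ hω x]
  rw [altS_succ (n+1) (fun a y => ⁅a, φ y⁆) x]
  rw [sub_add]
  congr 2
  · refine Finset.sum_congr rfl fun j _ => ?_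
    congr 1
    simp [altS, lie_sum]
  · have key : ∀ Q : g → (Fin n → g) → V, altS (n+2) (fun y => Q ⁅y 0, y 1⁆ (fun i => y i.succ.succ)) x
      = ∑ a : Fin (n + 2), ((-1 : ℤ) ^ (a : ℕ)) • ∑ b : Fin (n + 1), ((-1 : ℤ) ^ (b : ℕ)) •
        altS n (Q ⁅x a, x (a.succAbove b)⁆) ((x ∘ a.succAbove) ∘ b.succAbove) := by
      intro Q
      have := altS_succ (n+1) (fun a y => Q ⁅a, y 0⁆ (fun i => y i.succ)) x
      refine this.trans ?_
      refine Finset.sum_congr rfl fun a _ => ?_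
      congr 1
      exact altS_succ n (fun b y => Q ⁅x a, b⁆ y) (x ∘ a.succAbove)
    rw [key (fun z w => φ (Fin.cons z w : Fin (n + 1) → g))]
    rw [Finset.sum_congr rfl fun (k : Fin n) _ =>
      key (fun z w => φ (fun i => (Fin.cons z w : Fin (n + 1) → g) (swap 0 k.succ i)))]
    rw [Finset.sum_comm, ← Finset.sum_sub_distrib]
    refine Finset.sum_congr rfl fun a _ => ?_
    rw [← Finset.smul_sum, ← smul_sub, Finset.sum_comm, ← Finset.sum_sub_distrib]
    congr 1
    refine Finset.sum_congr rfl fun b _ => ?_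
    rw [← Finset.smul_sum, ← smul_sub, altS_cons]
end

lemma sum_pairs {V : Type*} [AddCommGroup V] (r : ℕ) (F : Fin (2 * r) → V) :
    ∑ k, F k = ∑ s : Fin r, (F ⟨2 * (s : ℕ), by omega⟩ + F ⟨2 * (s : ℕ) + 1, by omega⟩) := by
  induction r with
  | zero => rfl
  | succ r ih =>
    have h := Fin.sum_univ_castSucc (n := 2 * r + 1) F
    have h' := Fin.sum_univ_castSucc (n := 2 * r) (fun i => F (Fin.castSucc (n := 2 * r + 1) i))
    refine h.trans ?_
    rw [h', Fin.sum_univ_castSucc, ih, add_assoc]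
    rfl

section
variable {g N V : Type*} [LieRing g] [LieAlgebra ℝ g] [AddCommGroup N] [Module ℝ N]
  [AddCommGroup V] [Module ℝ V]

/-- arguments of `phi` -/
def vv {r : ℕ} (D : g →ₗ[ℝ] N) (R : g →ₗ[ℝ] g →ₗ[ℝ] N) (y : Fin (2 * r + 1) → g) :
    Fin (r + 1) → N :=
  Fin.cons (D (y 0)) (fun s : Fin r => R (y ⟨2 * (s : ℕ) + 1, by omega⟩)
    (y ⟨2 * (s : ℕ) + 2, by omega⟩))

/-- the pairs -/
def prs {r : ℕ} (R : g →ₗ[ℝ] g →ₗ[ℝ] N) (y : Fin (2 * r + 2) → g) : Fin r → N :=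
  fun s : Fin r => R (y ⟨2 * (s : ℕ) + 2, by omega⟩) (y ⟨2 * (s : ℕ) + 3, by omega⟩)

lemma vv_update {r : ℕ} (D : g →ₗ[ℝ] N) (R : g →ₗ[ℝ] g →ₗ[ℝ] N) (y : Fin (2 * r + 1) → g)
    (i : Fin (2 * r + 1)) : ∃ (s : Fin (r + 1)) (l : g →ₗ[ℝ] N), ∀ a,
      vv D R (Function.update y i a) = Function.update (vv D R y) s (l a) := by
  obtain ⟨i, hi⟩ := i
  rcases Nat.eq_zero_or_pos i with h0 | h0
  · subst h0
    refine ⟨0, D, fun a => ?_⟩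
    funext t
    refine Fin.cases ?_ (fun t => ?_) t
    · simp [vv]
    · simp [vv, Function.update_apply, Fin.ext_iff]
  · rcases Nat.even_or_odd' i with ⟨s, hs | hs⟩
    · obtain ⟨s, rfl⟩ : ∃ s', s = s' + 1 := ⟨s - 1, by omega⟩
      refine ⟨Fin.succ ⟨s, by omega⟩, R (y ⟨2 * s + 1, by omega⟩), fun a => ?_⟩
      funext t
      refine Fin.cases ?_ (fun t => ?_) t
      · have h1 : ¬ (0 = i) := by omega
        simp [vv, Function.update_apply, Fin.ext_iff, h1]
      · by_cases hts : (t : ℕ) = s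
        · subst hts
          have h1 : ¬ (2 * (t : ℕ) + 1 = i) := by omega
          have h2 : (2 * (t : ℕ) + 2 = i) := by omega
          simp [vv, Function.update_apply, Fin.ext_iff, h1, h2]
        · have h1 : ¬ (2 * (t : ℕ) + 1 = i) := by omega
          have h2 : ¬ (2 * (t : ℕ) + 2 = i) := by omega
          simp [vv, Function.update_apply, Fin.ext_iff, h1, h2, hts]
    · refine ⟨Fin.succ ⟨s, by omega⟩, R.flip (y ⟨2 * s + 2, by omega⟩), fun a => ?_⟩
      funext t
      refine Fin.cases ?_ (fun t => ?_) t
      · have h1 : ¬ (0 = i) := by omega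
        simp [vv, Function.update_apply, Fin.ext_iff, h1]
      · by_cases hts : (t : ℕ) = s
        · subst hts
          have h1 : (2 * (t : ℕ) + 1 = i) := by omega
          have h2 : ¬ (2 * (t : ℕ) + 2 = i) := by omega
          simp [vv, Function.update_apply, Fin.ext_iff, h1, h2]
        · have h1 : ¬ (2 * (t : ℕ) + 1 = i) := by omega
          have h2 : ¬ (2 * (t : ℕ) + 2 = i) := by omega
          simp [vv, Function.update_apply, Fin.ext_iff, h1, h2, hts]

/-- the transgression form before antisymmetrization -/
def phi {r : ℕ} (f : MultilinearMap ℝ (fun _ : Fin (r + 1) => N) V)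
    (D : g →ₗ[ℝ] N) (R : g →ₗ[ℝ] g →ₗ[ℝ] N) :
    MultilinearMap ℝ (fun _ : Fin (2 * r + 1) => g) V where
  toFun y := f (vv D R y)
  map_update_add' := by
    intro inst y i a b
    obtain rfl : inst = instDecidableEqFin _ := Subsingleton.elim _ _
    obtain ⟨s, l, h⟩ := vv_update D R y i
    simp only [h, map_add, MultilinearMap.map_update_add]
  map_update_smul' := by
    intro inst y i c a
    obtain rfl : inst = instDecidableEqFin _ := Subsingleton.elim _ _
    obtain ⟨s, l, h⟩ := vv_update D R y i
    simp only [h, map_smul, MultilinearMap.map_update_smul]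

lemma phi_alt {r : ℕ} (f : MultilinearMap ℝ (fun _ : Fin (r + 1) => N) V)
    (D : g →ₗ[ℝ] N) (R : g →ₗ[ℝ] g →ₗ[ℝ] N) :
    ⇑(MultilinearMap.alternatization (phi f D R)) = altS (2 * r + 1) (fun y => f (vv D R y)) := by
  funext x
  rw [MultilinearMap.alternatization_apply]
  rfl

lemma prs_update {r : ℕ} (R : g →ₗ[ℝ] g →ₗ[ℝ] N) (y : Fin (2 * r + 2) → g) (s : Fin r) (w : N)
    (ρ : Equiv.Perm (Fin (2 * r + 2)))
    (hρ : ∀ i : Fin (2 * r + 2), 2 ≤ (i : ℕ) → (i : ℕ) ≠ 2 * s + 2 → (i : ℕ) ≠ 2 * s + 3 → ρ i = i) :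
    Function.update (prs R (fun i => y (ρ i))) s w = Function.update (prs R y) s w := by
  funext t
  by_cases h : t = s
  · subst h; simp
  · have h' : (t : ℕ) ≠ s := fun e => h (Fin.ext e)
    rw [Function.update_of_ne h, Function.update_of_ne h]
    simp only [prs]
    rw [hρ, hρ] <;> simp <;> omega

/-- `f` with first entry `u` and entry `s+1` replaced with `w` -/
def EE {r : ℕ} (f : MultilinearMap ℝ (fun _ : Fin (r + 1) => N) V)
    (R : g →ₗ[ℝ] g →ₗ[ℝ] N) (s : Fin r) (u w : N) (y : Fin (2 * r + 2) → g) : V :=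
  f (Fin.cons u (Function.update (prs R y) s w) : Fin (r + 1) → N)

lemma EE_add {r : ℕ} (f : MultilinearMap ℝ (fun _ : Fin (r + 1) => N) V)
    (R : g →ₗ[ℝ] g →ₗ[ℝ] N) (s : Fin r) (u w w' : N) (y : Fin (2 * r + 2) → g) :
    EE f R s u (w + w') y = EE f R s u w y + EE f R s u w' y := by
  simp only [EE, Fin.cons_update, MultilinearMap.map_update_add]

lemma EE_neg {r : ℕ} (f : MultilinearMap ℝ (fun _ : Fin (r + 1) => N) V)
    (R : g →ₗ[ℝ] g →ₗ[ℝ] N) (s : Fin r) (u w : N) (y : Fin (2 * r + 2) → g) :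
    EE f R s u (-w) y = - EE f R s u w y := by
  simp only [EE, Fin.cons_update, MultilinearMap.map_update_neg]

lemma EE_sub {r : ℕ} (f : MultilinearMap ℝ (fun _ : Fin (r + 1) => N) V)
    (R : g →ₗ[ℝ] g →ₗ[ℝ] N) (s : Fin r) (u w w' : N) (y : Fin (2 * r + 2) → g) :
    EE f R s u (w - w') y = EE f R s u w y - EE f R s u w' y := by
  simp only [EE, Fin.cons_update, MultilinearMap.map_update_sub]

lemma EE_perm {r : ℕ} (f : MultilinearMap ℝ (fun _ : Fin (r + 1) => N) V)
    (R : g →ₗ[ℝ] g →ₗ[ℝ] N) (s : Fin r) (u w : N) (y : Fin (2 * r + 2) → g)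
    (ρ : Equiv.Perm (Fin (2 * r + 2)))
    (hρ : ∀ i : Fin (2 * r + 2), 2 ≤ (i : ℕ) → (i : ℕ) ≠ 2 * s + 2 → (i : ℕ) ≠ 2 * s + 3 → ρ i = i) :
    EE f R s u w (fun i => y (ρ i)) = EE f R s u w y := by
  rw [EE, prs_update R y s w ρ hρ, EE]

lemma slot_cancel {r : ℕ} (f : MultilinearMap ℝ (fun _ : Fin (r + 1) => N) V)
    (D : g →ₗ[ℝ] N) (R : g →ₗ[ℝ] g →ₗ[ℝ] N) (S : g → N → N)
    (hR : ∀ a b, R a b = - R b a)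
    (hB : ∀ a b c, (S a (R b c) - R ⁅a, b⁆ c) + (S b (R c a) - R ⁅b, c⁆ a)
      + (S c (R a b) - R ⁅c, a⁆ b) = 0)
    (x : Fin (2 * r + 2) → g) (s : Fin r) (P Q : Fin (2 * r + 2))
    (hP : (P : ℕ) = 2 * s + 2) (hQ : (Q : ℕ) = 2 * s + 3) :
    (2 : ℤ) • altS (2 * r + 2) (fun y => EE f R s (D (y 1)) (S (y 0) (R (y P) (y Q))) y) x
    + altS (2 * r + 2) (fun y => EE f R s (D (y P)) (R ⁅y 0, y 1⁆ (y Q)) y) x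
    + altS (2 * r + 2) (fun y => EE f R s (D (y Q)) (R (y P) ⁅y 0, y 1⁆) y) x = 0 := by
  have v0 : ((0 : Fin (2 * r + 2)) : ℕ) = 0 := rfl
  have v1 : ((1 : Fin (2 * r + 2)) : ℕ) = 1 := rfl
  have n01 : (0 : Fin (2 * r + 2)) ≠ 1 := by simp
  have n0P : (0 : Fin (2 * r + 2)) ≠ P := by intro h; have := congrArg Fin.val h; omega
  have n0Q : (0 : Fin (2 * r + 2)) ≠ Q := by intro h; have := congrArg Fin.val h; omega
  have n1P : (1 : Fin (2 * r + 2)) ≠ P := by intro h; have := congrArg Fin.val h; omega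
  have n1Q : (1 : Fin (2 * r + 2)) ≠ Q := by intro h; have := congrArg Fin.val h; omega
  have nPQ : P ≠ Q := by intro h; have := congrArg Fin.val h; omega
  have fixsw : ∀ a b : Fin (2 * r + 2), (a = 0 ∨ a = 1 ∨ a = P ∨ a = Q) →
      (b = 0 ∨ b = 1 ∨ b = P ∨ b = Q) →
      ∀ i : Fin (2 * r + 2), 2 ≤ (i : ℕ) → (i : ℕ) ≠ 2 * s + 2 → (i : ℕ) ≠ 2 * s + 3 →
        swap a b i = i := by
    intro a b ha hb i h1 h2 h3
    apply Equiv.swap_apply_of_ne_of_ne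
    · rintro rfl; rcases ha with h | h | h | h <;> have := congrArg Fin.val h <;> omega
    · rintro rfl; rcases hb with h | h | h | h <;> have := congrArg Fin.val h <;> omega
  set X := altS (2 * r + 2) (fun y => EE f R s (D (y 1)) (R ⁅y 0, y P⁆ (y Q)) y) x with hX
  have hC1 : altS (2 * r + 2) (fun y => EE f R s (D (y P)) (R ⁅y 0, y 1⁆ (y Q)) y) x = - X := by
    rw [hX, ← altS_swap _ _ _ 1 P n1P]
    congr 1
    funext y
    rw [EE_perm _ _ _ _ _ _ _ (fixsw 1 P (by simp) (by simp))]
    simp only [swap_apply_left, swap_apply_right, swap_apply_of_ne_of_ne n01 n0P,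
      swap_apply_of_ne_of_ne n1Q.symm nPQ.symm]
  have hC2 : altS (2 * r + 2) (fun y => EE f R s (D (y Q)) (R (y P) ⁅y 0, y 1⁆) y) x = - X := by
    rw [← hC1, ← neg_inj, ← altS_swap _ _ _ P Q nPQ, ← altS_neg]
    congr 1
    funext y
    rw [EE_perm _ _ _ _ _ _ _ (fixsw P Q (by simp) (by simp))]
    simp only [swap_apply_left, swap_apply_right, swap_apply_of_ne_of_ne n0P n0Q,
      swap_apply_of_ne_of_ne n1P n1Q]
    rw [hR (y Q), EE_neg]
  let ρ : Equiv.Perm (Fin (2 * r + 2)) := swap 0 P * swap P Q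
  have hρ : ∀ i : Fin (2 * r + 2), 2 ≤ (i : ℕ) → (i : ℕ) ≠ 2 * s + 2 → (i : ℕ) ≠ 2 * s + 3 →
        ρ i = i := by
    intro i h1 h2 h3
    simp only [ρ, Equiv.Perm.mul_apply]
    rw [fixsw P Q (by simp) (by simp) i h1 h2 h3, fixsw 0 P (by simp) (by simp) i h1 h2 h3]
  have r0 : ρ 0 = P := by simp [ρ, swap_apply_of_ne_of_ne n0P n0Q]
  have r1 : ρ 1 = 1 := by
    simp [ρ, swap_apply_of_ne_of_ne n1P n1Q, swap_apply_of_ne_of_ne n01.symm n1P]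
  have rP : ρ P = Q := by simp [ρ, swap_apply_of_ne_of_ne n0Q.symm nPQ.symm]
  have rQ : ρ Q = 0 := by simp [ρ]
  have sρ : (Equiv.Perm.sign ρ : ℤ) = 1 := by simp [ρ, Equiv.Perm.sign_swap n0P, Equiv.Perm.sign_swap nPQ]
  let Z : (Fin (2 * r + 2) → g) → V := fun y =>
    EE f R s (D (y 1)) (S (y 0) (R (y P) (y Q)) - R ⁅y 0, y P⁆ (y Q)) y
  have z1 : altS (2 * r + 2) (fun y => Z (fun i => y (ρ i))) x = altS (2 * r + 2) Z x := by
    rw [altS_perm, sρ, one_smul]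
  have z2 : altS (2 * r + 2) (fun y => Z (fun i => y (ρ (ρ i)))) x = altS (2 * r + 2) Z x := by
    rw [← z1, altS_perm _ (fun y => Z (fun i => y (ρ i))) x ρ, sρ, one_smul]
  have z3 : altS (2 * r + 2) Z x + altS (2 * r + 2) Z x + altS (2 * r + 2) Z x = 0 := by
    have e : altS (2 * r + 2) Z x + altS (2 * r + 2) Z x + altS (2 * r + 2) Z x =
      altS (2 * r + 2) Z x + altS (2 * r + 2) (fun y => Z (fun i => y (ρ i))) x
        + altS (2 * r + 2) (fun y => Z (fun i => y (ρ (ρ i)))) x := by rw [z1, z2]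
    rw [e, ← altS_add, ← altS_add]
    have : ∀ y, Z y + Z (fun i => y (ρ i)) + Z (fun i => y (ρ (ρ i))) = 0 := by
      intro y
      simp only [Z]
      rw [EE_perm _ _ _ _ _ _ ρ hρ]
      rw [EE_perm _ _ _ _ _ (fun i => y (ρ i)) ρ hρ, EE_perm _ _ _ _ _ y ρ hρ]
      simp only [r0, r1, rP, rQ]
      rw [← EE_add, ← EE_add, hB]
      simp only [EE, Fin.cons_update]
      apply MultilinearMap.map_update_zero
    simp only [this]
    simp [altS]
  have z4 : altS (2 * r + 2) Z x = 0 := by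
    have : altS (2 * r + 2) Z x = (1/3 : ℝ) •
      (altS (2 * r + 2) Z x + altS (2 * r + 2) Z x + altS (2 * r + 2) Z x) := by module
    rw [this, z3, smul_zero]
  have z5 : altS (2 * r + 2) Z x =
      altS (2 * r + 2) (fun y => EE f R s (D (y 1)) (S (y 0) (R (y P) (y Q))) y) x - X := by
    rw [hX, ← altS_sub]
    congr 1
    funext y
    simp only [Z, EE_sub]
  rw [hC1, hC2]
  rw [z5, sub_eq_zero] at z4
  rw [z4]
  module

lemma ceDiff_phi {r : ℕ} [LieRingModule g V]
    (f : MultilinearMap ℝ (fun _ : Fin (r + 1) => N) V)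
    (D : g →ₗ[ℝ] N) (R : g →ₗ[ℝ] g →ₗ[ℝ] N) (S : g → N → N)
    (hR : ∀ a b, R a b = - R b a)
    (hB : ∀ a b c, (S a (R b c) - R ⁅a, b⁆ c) + (S b (R c a) - R ⁅b, c⁆ a)
      + (S c (R a b) - R ⁅c, a⁆ b) = 0)
    (hinv : ∀ (a : g) (y : Fin (r + 1) → N),
      ⁅a, f y⁆ = ∑ i : Fin (r + 1), f (Function.update y i (S a (y i))))
    (x : Fin (2 * r + 2) → g) :
    (2 : ℤ) • ceDiff (2 * r + 1) (MultilinearMap.alternatization (phi f D R)) x =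
      altS (2 * r + 2) (fun y => f (Fin.cons (S (y 0) (D (y 1)) + S (y 0) (D (y 1)) - D ⁅y 0, y 1⁆)
        (prs R y))) x := by
  rw [phi_alt, ceDiff_altS]
  swap
  · intro z y
    rw [← phi_alt]
    have := MultilinearMap.cons_smul
      (MultilinearMap.alternatization (phi f D R)).toMultilinearMap y (-1 : ℝ) z
    simpa using this
  have hA : ∀ y : Fin (2 * r + 2) → g, ⁅y 0, f (vv D R fun i => y i.succ)⁆ =
      f (Fin.cons (S (y 0) (D (y 1))) (prs R y)) +
      ∑ s : Fin r, EE f R s (D (y 1)) (S (y 0) (R (y ⟨2 * s + 2, by omega⟩)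
        (y ⟨2 * s + 3, by omega⟩))) y := by
    intro y
    rw [hinv, Fin.sum_univ_succ]
    have hv : (vv D R fun i => y i.succ) = (Fin.cons (D (y 1)) (prs R y) : Fin (r + 1) → N) := rfl
    rw [hv, Fin.update_cons_zero]
    simp only [← Fin.cons_update]
    rfl
  have hBt : ∀ y : Fin (2 * r + 2) → g,
      f (vv D R (Fin.cons ⁅y 0, y 1⁆ (fun i => y i.succ.succ))) =
      f (Fin.cons (D ⁅y 0, y 1⁆) (prs R y)) := fun y => rfl
  have hC1 : ∀ (s : Fin r) (y : Fin (2 * r + 2) → g),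
      f (vv D R (fun i => (Fin.cons ⁅y 0, y 1⁆ (fun i => y i.succ.succ) : Fin (2 * r + 1) → g)
        (swap 0 (Fin.succ ⟨2 * (s : ℕ), by omega⟩) i))) =
      EE f R s (D (y ⟨2 * s + 2, by omega⟩)) (R ⁅y 0, y 1⁆ (y ⟨2 * s + 3, by omega⟩)) y := by
    intro s y
    unfold EE
    congr 1
    funext t
    refine Fin.cases ?_ (fun t => ?_) t
    · simp only [vv, Fin.cons_zero, swap_apply_left]
      rfl
    · simp only [vv, Fin.cons_succ]
      by_cases h : t = s
      · subst h
        rw [Function.update_self]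
        have e1 : (⟨2 * (t : ℕ) + 1, by omega⟩ : Fin (2 * r + 1)) = Fin.succ ⟨2 * (t : ℕ), by omega⟩ :=
          rfl
        rw [e1, swap_apply_right, swap_apply_of_ne_of_ne]
        · rfl
        · simp [Fin.ext_iff]
        · simp [Fin.ext_iff]
      · have h' : (t : ℕ) ≠ s := fun e => h (Fin.ext e)
        rw [Function.update_of_ne h, swap_apply_of_ne_of_ne, swap_apply_of_ne_of_ne]
        · rfl
        all_goals (simp [Fin.ext_iff]) 
        all_goals omega
  have hC2 : ∀ (s : Fin r) (y : Fin (2 * r + 2) → g),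
      f (vv D R (fun i => (Fin.cons ⁅y 0, y 1⁆ (fun i => y i.succ.succ) : Fin (2 * r + 1) → g)
        (swap 0 (Fin.succ ⟨2 * (s : ℕ) + 1, by omega⟩) i))) =
      EE f R s (D (y ⟨2 * s + 3, by omega⟩)) (R (y ⟨2 * s + 2, by omega⟩) ⁅y 0, y 1⁆) y := by
    intro s y
    unfold EE
    congr 1
    funext t
    refine Fin.cases ?_ (fun t => ?_) t
    · simp only [vv, Fin.cons_zero, swap_apply_left]
      rfl
    · simp only [vv, Fin.cons_succ]
      by_cases h : t = s
      · subst h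
        rw [Function.update_self]
        have e1 : (⟨2 * (t : ℕ) + 2, by omega⟩ : Fin (2 * r + 1)) =
          Fin.succ ⟨2 * (t : ℕ) + 1, by omega⟩ := rfl
        rw [e1, swap_apply_right, swap_apply_of_ne_of_ne]
        · rfl
        · simp [Fin.ext_iff]
        · simp [Fin.ext_iff]
      · have h' : (t : ℕ) ≠ s := fun e => h (Fin.ext e)
        rw [Function.update_of_ne h, swap_apply_of_ne_of_ne, swap_apply_of_ne_of_ne]
        · rfl
        all_goals (simp [Fin.ext_iff]) 
        all_goals omega
  rw [sum_pairs]
  simp only [hA, hBt, hC1, hC2]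
  rw [altS_add, altS_sum]
  have hsum : (2 : ℤ) • (∑ s : Fin r, altS (2 * r + 2) (fun y => EE f R s (D (y 1))
      (S (y 0) (R (y ⟨2 * s + 2, by omega⟩) (y ⟨2 * s + 3, by omega⟩))) y) x)
    + ∑ s : Fin r, (altS (2 * r + 2) (fun y => EE f R s (D (y ⟨2 * s + 2, by omega⟩))
        (R ⁅y 0, y 1⁆ (y ⟨2 * s + 3, by omega⟩)) y) x
      + altS (2 * r + 2) (fun y => EE f R s (D (y ⟨2 * s + 3, by omega⟩))
        (R (y ⟨2 * s + 2, by omega⟩) ⁅y 0, y 1⁆) y) x) = 0 := by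
    rw [Finset.smul_sum, ← Finset.sum_add_distrib]
    refine Finset.sum_eq_zero fun s _ => ?_
    rw [← add_assoc]
    exact slot_cancel f D R S hR hB x s _ _ rfl rfl
  have hfin : ∀ y : Fin (2 * r + 2) → g,
      f (Fin.cons (S (y 0) (D (y 1)) + S (y 0) (D (y 1)) - D ⁅y 0, y 1⁆) (prs R y)) =
      f (Fin.cons (S (y 0) (D (y 1))) (prs R y)) + f (Fin.cons (S (y 0) (D (y 1))) (prs R y))
      - f (Fin.cons (D ⁅y 0, y 1⁆) (prs R y)) := by
    intro y
    rw [sub_eq_add_neg, f.cons_add, f.cons_add, ← neg_one_smul ℝ (D ⁅y 0, y 1⁆), f.cons_smul]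
    module
  simp only [hfin]
  rw [altS_sub, altS_add]
  rw [← sub_eq_zero, ← hsum]
  module
end

lemma mult_hasDeriv {W : Type*} [AddCommGroup W] [Module ℝ W] {p : ℕ}
    (M : MultilinearMap ℝ (fun _ : Fin p => W) ℝ) (a b c : W) (t : ℝ) :
    HasDerivAt (fun t : ℝ => M (fun _ => a + t • b + (t ^ 2) • c))
      (∑ i, M (Function.update (fun _ => a + t • b + (t ^ 2) • c) i (b + (2 * t) • c))) t := by
  let L : (Fin 3 → ℝ) →ₗ[ℝ] W :=
    { toFun := fun v => v 0 • a + v 1 • b + v 2 • c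
      map_add' := by intro v w; simp only [Pi.add_apply]; module
      map_smul' := by intro v w; simp only [Pi.smul_apply, smul_eq_mul, RingHom.id_apply]; module }
  let M' : MultilinearMap ℝ (fun _ : Fin p => (Fin 3 → ℝ)) ℝ := M.compLinearMap (fun _ => L)
  have hc : Continuous M' := by
    have he : ∀ v : Fin p → (Fin 3 → ℝ), M' v = ∑ κ : Fin p → Fin 3,
        (∏ j, v j (κ j)) * M' (fun j => Pi.single (κ j) 1) := by
      intro v
      have hv : v = fun j => ∑ k : Fin 3, v j k • (Pi.single k 1 : Fin 3 → ℝ) := by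
        funext j
        rw [← Finset.univ_sum_single (v j)]
        refine Finset.sum_congr rfl fun k _ => ?_
        rw [Finset.univ_sum_single (v j), ← Pi.single_smul']
        simp
      conv_lhs => rw [hv]
      rw [MultilinearMap.map_sum]
      refine Finset.sum_congr rfl fun κ _ => ?_
      rw [MultilinearMap.map_smul_univ, smul_eq_mul]
    have he' : ⇑M' = fun v => ∑ κ : Fin p → Fin 3,
        (∏ j, v j (κ j)) * M' (fun j => Pi.single (κ j) 1) := funext he
    rw [he']
    fun_prop
  let MC : ContinuousMultilinearMap ℝ (fun _ : Fin p => (Fin 3 → ℝ)) ℝ := ⟨M', hc⟩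
  let u : ℝ → Fin 3 → ℝ := fun t => ![1, t, t ^ 2]
  have hu : HasDerivAt u ![0, 1, 2 * t] t := by
    rw [hasDerivAt_pi]
    intro i
    fin_cases i
    · exact hasDerivAt_const _ _
    · exact hasDerivAt_id _
    · have h2 := hasDerivAt_pow 2 t
      rw [show ((2 : ℕ) : ℝ) * t ^ (2 - 1) = 2 * t by norm_num] at h2
      exact h2
  have hF := (MC.hasFDerivAt (fun _ => u t))
  have hU : HasDerivAt (fun t => (fun _ : Fin p => u t)) (fun _ => ![0, 1, 2 * t]) t := by
    rw [hasDerivAt_pi]; intro i; exact hu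
  have := hF.comp_hasDerivAt t hU
  have e1 : ∀ t, L (u t) = a + t • b + (t ^ 2) • c := by intro t; simp [L, u]
  have e2 : L ![0, 1, 2 * t] = b + (2 * t) • c := by simp [L]
  have h1 : (fun t : ℝ => M (fun _ => a + t • b + (t ^ 2) • c)) = (fun x => MC x) ∘ fun t _ => u t := by
    funext t
    change _ = M (fun _ => L (u t))
    simp only [e1]
  rw [h1]
  refine this.congr_deriv (Eq.symm ?_)
  rw [ContinuousMultilinearMap.linearDeriv_apply]
  refine Finset.sum_congr rfl fun i _ => ?_
  change _ = M (fun j => L (Function.update (fun _ => u t) i ![0, 1, 2 * t] j))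
  congr 1
  funext j
  by_cases h : j = i
  · subst h; simp [e2]
  · simp [h, e1]

lemma sym_step {g N V : Type*} [LieRing g] [LieAlgebra ℝ g] [AddCommGroup N] [Module ℝ N]
    [AddCommGroup V] [Module ℝ V] {r : ℕ}
    (f : MultilinearMap ℝ (fun _ : Fin (r + 1) => N) V)
    (hsym : ∀ (y : Fin (r + 1) → N) (τ : Equiv.Perm (Fin (r + 1))), f (fun i => y (τ i)) = f y)
    (R : g →ₗ[ℝ] g →ₗ[ℝ] N) (R' T : g → g → N) (hR' : ∀ a b, R' a b = R a b)
    (i : Fin (r + 1)) (x : Fin (2 * r + 2) → g) :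
    altS (2 * r + 2) (fun y => f (fun s : Fin (r + 1) =>
      (Function.update (fun _ : Fin (r + 1) => R') i T) s
        (y ⟨2 * (s : ℕ), by omega⟩) (y ⟨2 * (s : ℕ) + 1, by omega⟩))) x =
    altS (2 * r + 2) (fun y => f (Fin.cons (T (y 0) (y 1)) (prs R y))) x := by
  revert i
  refine Fin.cases ?_ (fun i => ?_)
  · congr 1
    funext y
    congr 1
    funext s
    refine Fin.cases ?_ (fun s => ?_) s
    · simp only [Function.update_self, Fin.cons_zero]
      rfl
    · rw [Function.update_of_ne (Fin.succ_ne_zero s), Fin.cons_succ, hR']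
      rfl
  · let P : Fin (2 * r + 2) := ⟨2 * i + 2, by omega⟩
    let Q : Fin (2 * r + 2) := ⟨2 * i + 3, by omega⟩
    have v0 : ((0 : Fin (2 * r + 2)) : ℕ) = 0 := rfl
    have v1 : ((1 : Fin (2 * r + 2)) : ℕ) = 1 := rfl
    have hP : (P : ℕ) = 2 * i + 2 := rfl
    have hQ : (Q : ℕ) = 2 * i + 3 := rfl
    have n01 : (0 : Fin (2 * r + 2)) ≠ 1 := by simp
    have n0P : (0 : Fin (2 * r + 2)) ≠ P := by intro h; have := congrArg Fin.val h; omega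
    have n0Q : (0 : Fin (2 * r + 2)) ≠ Q := by intro h; have := congrArg Fin.val h; omega
    have n1P : (1 : Fin (2 * r + 2)) ≠ P := by intro h; have := congrArg Fin.val h; omega
    have n1Q : (1 : Fin (2 * r + 2)) ≠ Q := by intro h; have := congrArg Fin.val h; omega
    have nPQ : P ≠ Q := by intro h; have := congrArg Fin.val h; omega
    let ρ : Equiv.Perm (Fin (2 * r + 2)) := swap 0 P * swap 1 Q
    have r0 : ρ 0 = P := by simp [ρ, swap_apply_of_ne_of_ne n01 n0Q]
    have r1 : ρ 1 = Q := by simp [ρ, swap_apply_of_ne_of_ne n0Q.symm nPQ.symm]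
    have rP : ρ P = 0 := by simp [ρ, swap_apply_of_ne_of_ne n1P.symm nPQ]
    have rQ : ρ Q = 1 := by simp [ρ, swap_apply_of_ne_of_ne n01.symm n1P]
    have sρ : (Equiv.Perm.sign ρ : ℤ) = 1 := by
      simp [ρ, Equiv.Perm.sign_swap n0P, Equiv.Perm.sign_swap n1Q]
    have ro : ∀ k : Fin (2 * r + 2), k ≠ 0 → k ≠ 1 → k ≠ P → k ≠ Q → ρ k = k := by
      intro k h1 h2 h3 h4
      simp only [ρ, Equiv.Perm.mul_apply]
      rw [swap_apply_of_ne_of_ne h2 h4, swap_apply_of_ne_of_ne h1 h3]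
    have := altS_perm (2 * r + 2)
      (fun y : Fin (2 * r + 2) → g => f (Fin.cons (T (y 0) (y 1)) (prs R y))) x ρ
    rw [sρ, one_smul] at this
    rw [← this]
    congr 1
    funext y
    rw [← hsym _ (swap 0 i.succ)]
    congr 1
    funext s
    refine Fin.cases ?_ (fun s => ?_) s
    · simp only [swap_apply_left, Function.update_self, Fin.cons_zero, r0, r1]
      rfl
    · rw [Fin.cons_succ]
      by_cases h : s = i
      · subst h
        simp only [swap_apply_right]
        rw [Function.update_of_ne (Fin.succ_ne_zero s).symm, hR']
        change _ = R (y (ρ P)) (y (ρ Q))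
        rw [rP, rQ]
        rfl
      · have h' : (s : ℕ) ≠ i := fun e => h (Fin.ext e)
        have h2 : s.succ ≠ i.succ := fun e => h (Fin.succ_injective _ e)
        rw [swap_apply_of_ne_of_ne (Fin.succ_ne_zero s) h2, Function.update_of_ne h2, hR']
        simp only [prs]
        rw [ro, ro]
        · rfl
        all_goals
          intro e
          have := congrArg Fin.val e
          simp only [v0, v1, hP, hQ] at this
          omega

section
variable {g gh V : Type*} [LieRing g] [LieAlgebra ℝ g] [LieRing gh] [LieAlgebra ℝ gh]

/-- the curvature as a bilinear map -/
def curvBil (π : gh →ₗ⁅ℝ⁆ g) (σ : g →ₗ[ℝ] gh) (hσ : ∀ x, π (σ x) = x) :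
    g →ₗ[ℝ] g →ₗ[ℝ] π.ker :=
  LinearMap.mk₂ ℝ (curvKer π σ hσ)
    (by intro a b c; apply Subtype.ext; simp [curvKer]; abel)
    (by intro k a b; apply Subtype.ext; simp [curvKer, smul_sub])
    (by intro a b c; apply Subtype.ext; simp [curvKer]; abel)
    (by intro k a b; apply Subtype.ext; simp [curvKer, smul_sub])

lemma curv_skew (π : gh →ₗ⁅ℝ⁆ g) (σ : g →ₗ[ℝ] gh) (hσ : ∀ x, π (σ x) = x) (a b : g) :
    curvBil π σ hσ a b = - curvBil π σ hσ b a := by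
  apply Subtype.ext
  simp only [curvBil, LinearMap.mk₂_apply, curvKer, LieSubmodule.coe_neg]
  rw [← lie_skew (σ a), ← lie_skew a, map_neg]
  abel

lemma bianchi (π : gh →ₗ⁅ℝ⁆ g) (σ : g →ₗ[ℝ] gh) (hσ : ∀ x, π (σ x) = x) (a b c : g) :
    (⁅σ a, curvBil π σ hσ b c⁆ - curvBil π σ hσ ⁅a, b⁆ c)
      + (⁅σ b, curvBil π σ hσ c a⁆ - curvBil π σ hσ ⁅b, c⁆ a)
      + (⁅σ c, curvBil π σ hσ a b⁆ - curvBil π σ hσ ⁅c, a⁆ b) = 0 := by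
  apply Subtype.ext
  simp only [curvBil, LinearMap.mk₂_apply, curvKer, LieSubmodule.coe_add, LieSubmodule.coe_sub,
    LieSubmodule.coe_bracket, LieSubmodule.coe_zero, lie_sub]
  have j1 := lie_jacobi (σ a) (σ b) (σ c)
  have j2 := congrArg σ (lie_jacobi a b c)
  rw [map_add, map_add, map_zero] at j2
  rw [← lie_skew (σ ⁅a, b⁆), ← lie_skew (σ ⁅b, c⁆), ← lie_skew (σ ⁅c, a⁆),
    ← lie_skew ⁅a, b⁆ c, ← lie_skew ⁅b, c⁆ a, ← lie_skew ⁅c, a⁆ b, map_neg, map_neg, map_neg]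
  rw [← sub_eq_zero.mpr (j1.trans j2.symm)]
  abel

end

/-- `ceDiff` as a linear map on alternating maps -/
def ceLin {g V : Type*} [LieRing g] [LieAlgebra ℝ g] [AddCommGroup V] [Module ℝ V]
    [LieRingModule g V] [LieModule ℝ g V] (m : ℕ) :
    AlternatingMap ℝ g V (Fin m) →ₗ[ℝ] ((Fin (m + 1) → g) → V) where
  toFun η := ceDiff m η
  map_add' := by
    intro η θ
    funext x
    simp only [ceDiff, AlternatingMap.add_apply, Pi.add_apply, lie_add, smul_add,
      Finset.sum_add_distrib, ite_add_zero]
    abel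
  map_smul' := by
    intro c η
    funext x
    simp only [ceDiff, AlternatingMap.smul_apply, Pi.smul_apply, lie_smul, RingHom.id_apply,
      smul_add, Finset.smul_sum, smul_ite, smul_zero, smul_comm c]

lemma core {g gh V : Type*}
    [LieRing g] [LieAlgebra ℝ g] [LieRing gh] [LieAlgebra ℝ gh]
    [AddCommGroup V] [Module ℝ V] [LieRingModule g V] [LieModule ℝ g V]
    (π : gh →ₗ⁅ℝ⁆ g) (r : ℕ)
    (σ₀ σ₁ : g →ₗ[ℝ] gh) (h₀ : ∀ x, π (σ₀ x) = x) (h₁ : ∀ x, π (σ₁ x) = x)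
    (f : MultilinearMap ℝ (fun _ : Fin (r + 1) => π.ker) V)
    (hsym : ∀ (y : Fin (r + 1) → π.ker) (τ : Equiv.Perm (Fin (r + 1))), f (fun i => y (τ i)) = f y)
    (hinv : ∀ (x : gh) (y : Fin (r + 1) → π.ker),
      ⁅π x, f y⁆ = ∑ i : Fin (r + 1), f (Function.update y i ⁅x, y i⁆)) 
    (ha : 2 * r + 1 + 1 = 2 * (r + 1)) :
    ∃ η : AlternatingMap ℝ g V (Fin (2 * r + 1)),
      chernWeil π (r + 1) (2 * r + 1 + 1) ha σ₀ h₀ f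
        - chernWeil π (r + 1) (2 * r + 1 + 1) ha σ₁ h₁ f
        = ceDiff (2 * r + 1) ⇑η := by
  let D : g →ₗ[ℝ] π.ker :=
    { toFun := fun x => ⟨σ₁ x - σ₀ x, by rw [LieHom.mem_ker]; simp [h₀, h₁]⟩
      map_add' := by intro a b; apply Subtype.ext; simp; abel
      map_smul' := by intro a b; apply Subtype.ext; simp [smul_sub] }
  have hD : ∀ x, ((D x : π.ker) : gh) = σ₁ x - σ₀ x := fun x => rfl
  let σ : ℝ → g →ₗ[ℝ] gh := fun t => σ₀ + t • (σ₁ - σ₀)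
  have hσ : ∀ t x, π (σ t x) = x := by intro t x; simp [σ, h₀, h₁]
  let K : ℝ → g → g → π.ker := fun t => curvKer π (σ t) (hσ t)
  let b : g → g → π.ker := fun x y => ⁅σ₀ x, D y⁆ - ⁅σ₀ y, D x⁆ - D ⁅x, y⁆
  let c : g → g → π.ker := fun x y => ⁅D x, D y⁆
  have hK : ∀ t, K t = K 0 + t • b + (t ^ 2) • c := by
    intro t
    funext x y
    apply Subtype.ext
    simp only [K, b, c, curvKer, σ, Pi.add_apply, Pi.smul_apply, LieSubmodule.coe_add,
      LieSubmodule.coe_sub, LieSubmodule.coe_smul, LieSubmodule.coe_bracket, hD,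
      LinearMap.add_apply, LinearMap.smul_apply, LinearMap.sub_apply, zero_smul, add_zero]
    rw [show ((⁅D x, D y⁆ : π.ker) : gh) = ⁅σ₁ x - σ₀ x, σ₁ y - σ₀ y⁆ from rfl]
    rw [← lie_skew (σ₀ y)]
    simp only [lie_add, add_lie, lie_smul, smul_lie]
    module
  have hb : ∀ t x y, (b + (2 * t) • c) x y = ⁅σ t x, D y⁆ - ⁅σ t y, D x⁆ - D ⁅x, y⁆ := by
    intro t x y
    apply Subtype.ext
    simp only [b, c, σ, Pi.add_apply, Pi.smul_apply, LieSubmodule.coe_add,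
      LieSubmodule.coe_sub, LieSubmodule.coe_smul, LieSubmodule.coe_bracket, hD,
      LinearMap.add_apply, LinearMap.smul_apply, LinearMap.sub_apply]
    rw [show ((⁅D x, D y⁆ : π.ker) : gh) = ⁅σ₁ x - σ₀ x, σ₁ y - σ₀ y⁆ from rfl]
    simp only [add_lie, smul_lie]
    rw [← lie_skew (σ₁ y - σ₀ y) (σ₁ x - σ₀ x)]
    module
  let M : MultilinearMap ℝ (fun _ : Fin (r + 1) => g → g → π.ker) ((Fin (2 * r + 1 + 1) → g) → V) :=
    MultilinearMap.pi fun x => ((2 : ℝ) ^ (r + 1))⁻¹ •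
      ∑ τ : Equiv.Perm (Fin (2 * r + 2)), (Equiv.Perm.sign τ : ℤ) •
        f.compLinearMap (fun s : Fin (r + 1) =>
          (LinearMap.proj (R := ℝ) (φ := fun _ : g => π.ker) (x (τ ⟨2 * (s : ℕ) + 1, by omega⟩))) ∘ₗ
          (LinearMap.proj (R := ℝ) (φ := fun _ : g => g → π.ker) (x (τ ⟨2 * (s : ℕ), by omega⟩))))
  have hM : ∀ w x, M w x = ((2 : ℝ) ^ (r + 1))⁻¹ • altS (2 * r + 2) (fun y => f (fun s : Fin (r + 1) =>
      w s (y ⟨2 * (s : ℕ), by omega⟩) (y ⟨2 * (s : ℕ) + 1, by omega⟩))) x := by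
    intro w x
    simp [M, altS]
  have hCW : ∀ t, chernWeil π (r + 1) (2 * r + 1 + 1) ha (σ t) (hσ t) f = M (fun _ => K t) := by
    intro t
    funext x
    rw [hM]
    rfl
  have hmem : ∀ t i, M (Function.update (fun _ => K t) i (b + (2 * t) • c)) ∈
      LinearMap.range (ceLin (g := g) (V := V) (2 * r + 1)) := by
    intro t i
    refine ⟨(((2 : ℝ) ^ (r + 1))⁻¹ * 2) •
      MultilinearMap.alternatization (phi f D (curvBil π (σ t) (hσ t))), ?_⟩
    rw [map_smul]
    funext x
    rw [hM, sym_step f hsym (curvBil π (σ t) (hσ t)) (K t) _ (fun _ _ => rfl)]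
    have h := ceDiff_phi f D (curvBil π (σ t) (hσ t)) (fun a n => ⁅σ t a, n⁆)
      (curv_skew π (σ t) (hσ t)) (bianchi π (σ t) (hσ t))
      (by intro a y; have := hinv (σ t a) y; rwa [hσ] at this) x
    rw [Pi.smul_apply]
    change (((2 : ℝ) ^ (r + 1))⁻¹ * 2) • ceDiff (2 * r + 1)
      (⇑(MultilinearMap.alternatization (phi f D (curvBil π (σ t) (hσ t))))) x = _
    rw [mul_smul]
    congr 1
    rw [show (2 : ℝ) • ceDiff (2 * r + 1) (MultilinearMap.alternatization
      (phi f D (curvBil π (σ t) (hσ t)))) x = (2 : ℤ) • ceDiff (2 * r + 1)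
      (MultilinearMap.alternatization (phi f D (curvBil π (σ t) (hσ t)))) x by module, h]
    set R := curvBil π (σ t) (hσ t) with hRdef
    have e1 : ∀ y : Fin (2 * r + 2) → g, f (Fin.cons ((b + (2 * t) • c) (y 0) (y 1)) (prs R y)) =
        f (Fin.cons ⁅σ t (y 0), D (y 1)⁆ (prs R y)) - f (Fin.cons ⁅σ t (y 1), D (y 0)⁆ (prs R y))
        - f (Fin.cons (D ⁅y 0, y 1⁆) (prs R y)) := by
      intro y
      rw [hb, sub_eq_add_neg, sub_eq_add_neg, f.cons_add, f.cons_add,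
        ← neg_one_smul ℝ (D ⁅y 0, y 1⁆), ← neg_one_smul ℝ ⁅σ t (y 1), D (y 0)⁆,
        f.cons_smul, f.cons_smul]
      module
    have e2 : ∀ y : Fin (2 * r + 2) → g,
        f (Fin.cons (⁅σ t (y 0), D (y 1)⁆ + ⁅σ t (y 0), D (y 1)⁆ - D ⁅y 0, y 1⁆) (prs R y)) =
        f (Fin.cons ⁅σ t (y 0), D (y 1)⁆ (prs R y)) + f (Fin.cons ⁅σ t (y 0), D (y 1)⁆ (prs R y))
        - f (Fin.cons (D ⁅y 0, y 1⁆) (prs R y)) := by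
      intro y
      rw [sub_eq_add_neg, f.cons_add, f.cons_add,
        ← neg_one_smul ℝ (D ⁅y 0, y 1⁆), f.cons_smul]
      module
    have e3 : altS (2 * r + 2) (fun y => f (Fin.cons ⁅σ t (y 1), D (y 0)⁆ (prs R y))) x =
        - altS (2 * r + 2) (fun y => f (Fin.cons ⁅σ t (y 0), D (y 1)⁆ (prs R y))) x := by
      rw [← altS_swap _ _ _ 0 1 (by simp)]
      congr 1
    simp only [e1, e2]
    rw [altS_sub, altS_sub, altS_sub, altS_add, e3]
    abel
  have hmain : M (fun _ => K 0) - M (fun _ => K 1) ∈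
      LinearMap.range (ceLin (g := g) (V := V) (2 * r + 1)) := by
    by_contra hnot
    obtain ⟨l, hl, hle⟩ := Submodule.exists_le_ker_of_notMem hnot
    apply hl
    have hder : ∀ t, HasDerivAt (fun t : ℝ => l (M (fun _ => K t))) 0 t := by
      intro t
      have h := mult_hasDeriv (l.compMultilinearMap M) (K 0) b c t
      have hz : ∑ i, (l.compMultilinearMap M) (Function.update
          (fun _ => K 0 + t • b + (t ^ 2) • c) i (b + (2 * t) • c)) = 0 := by
        refine Finset.sum_eq_zero fun i _ => ?_
        rw [← hK]
        exact hle (hmem t i)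
      rw [hz] at h
      simp only [← hK] at h
      exact h
    have hconst := is_const_of_deriv_eq_zero (fun t => (hder t).differentiableAt)
      (fun t => (hder t).deriv) 0 1
    rw [map_sub, sub_eq_zero]
    exact hconst
  obtain ⟨η, hη⟩ := hmain
  refine ⟨η, ?_⟩
  have e0 : chernWeil π (r + 1) (2 * r + 1 + 1) ha σ₀ h₀ f = M (fun _ => K 0) := by
    rw [← hCW]
    congr 1
    simp [σ]
  have e1 : chernWeil π (r + 1) (2 * r + 1 + 1) ha σ₁ h₁ f = M (fun _ => K 1) := by
    rw [← hCW]
    congr 1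
    simp [σ]
  rw [e0, e1, ← hη]
  rfl

/-- **Lecomte's generalized Chern–Weil map is well defined**: for two linear sections
`σ₀, σ₁` of `π` the Chern–Weil cocycles `f_{σ₀}` and `f_{σ₁}` differ by the
Chevalley–Eilenberg coboundary of some alternating `(2p−1)`-linear map `η`. -/
theorem chernWeil_class_independent_of_section {g gh V : Type*}
    [LieRing g] [LieAlgebra ℝ g] [FiniteDimensional ℝ g]
    [LieRing gh] [LieAlgebra ℝ gh] [FiniteDimensional ℝ gh]
    [AddCommGroup V] [Module ℝ V] [FiniteDimensional ℝ V]
    [LieRingModule g V] [LieModule ℝ g V]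
    (π : gh →ₗ⁅ℝ⁆ g) (hπ : Function.Surjective π)
    (p : ℕ) (hp : 1 ≤ p)
    (σ₀ σ₁ : g →ₗ[ℝ] gh) (h₀ : ∀ x, π (σ₀ x) = x) (h₁ : ∀ x, π (σ₁ x) = x)
    (f : MultilinearMap ℝ (fun _ : Fin p => π.ker) V)
    (hsym : ∀ (y : Fin p → π.ker) (τ : Equiv.Perm (Fin p)), f (fun i => y (τ i)) = f y)
    (hinv : ∀ (x : gh) (y : Fin p → π.ker),
      ⁅π x, f y⁆ = ∑ i : Fin p, f (Function.update y i ⁅x, y i⁆)) :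
    ∃ η : AlternatingMap ℝ g V (Fin (2 * p - 1)),
      chernWeil π p (2 * p - 1 + 1) (by omega) σ₀ h₀ f
        - chernWeil π p (2 * p - 1 + 1) (by omega) σ₁ h₁ f
        = ceDiff (2 * p - 1) ⇑η := by
  obtain ⟨r, rfl⟩ : ∃ r, p = r + 1 := ⟨p - 1, by omega⟩
  have key : ∀ (m : ℕ) (_ : m = 2 * r + 1) (ha : m + 1 = 2 * (r + 1)),
      ∃ η : AlternatingMap ℝ g V (Fin m),
      chernWeil π (r + 1) (m + 1) ha σ₀ h₀ f - chernWeil π (r + 1) (m + 1) ha σ₁ h₁ f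
        = ceDiff m ⇑η := by
    rintro m rfl ha
    exact core π r σ₀ σ₁ h₀ h₁ f hsym hinv ha
  exact key (2 * (r + 1) - 1) (by omega) (by omega)
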